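/- The rank of the matrix A equals K. -/

import Mathlib

/-- The value ±1 associated to a Boolean sign. -/
noncomputable def sgn (b : Bool) : ℝ := if b then 1 else -1

/-- The `2^K × 2^K` matrix with rows and columns indexed by sign vectors
`u, v ∈ {−1,1}^K` (encoded as `Fin K → Bool`), with entries
`A_{u,v} = Σ_{m=1}^K (−1)^m u_m v_m`. -/
noncomputable def volcanoA (K : ℕ) : Matrix (Fin K → Bool) (Fin K → Bool) ℝ :=
  Matrix.of fun u v => ∑ m : Fin K, (-1 : ℝ) ^ ((m : ℕ) + 1) * sgn (u m) * sgn (v m)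

/- Write `A = S D Sᵀ`, where the rows of `S` are the sign vectors and `D` is the diagonal matrix of
the signs `(-1) ^ m`. Flipping the `i`-th coordinate of the all-ones vector changes it by twice the
`i`-th unit vector, so the rows of `S` span and `S` has a left inverse. Hence `A` has the same rank
as `D`, whose diagonal entries are nonzero. -/

open Matrix

section RankOneSidedInverse

variable {l m n R : Type*} [Fintype m] [Fintype n] [DecidableEq m] [CommSemiring R]
  [StrongRankCondition R]

theorem rank_mul_eq_right_of_mul_eq_one [Fintype l] {P : Matrix l m R} {P' : Matrix m l R}
    (h : P' * P = 1) (M : Matrix m n R) : (P * M).rank = M.rank := by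
  refine le_antisymm (rank_mul_le_right P M) ?_
  calc M.rank = (P' * (P * M)).rank := by rw [← Matrix.mul_assoc, h, Matrix.one_mul]
    _ ≤ (P * M).rank := rank_mul_le_right _ _

theorem rank_mul_eq_left_of_mul_eq_one {Q : Matrix m n R} {Q' : Matrix n m R}
    (h : Q * Q' = 1) (M : Matrix l m R) : (M * Q).rank = M.rank := by
  refine le_antisymm (rank_mul_le_left M Q) ?_
  calc M.rank = (M * Q * Q').rank := by rw [Matrix.mul_assoc, h, Matrix.mul_one]
    _ ≤ (M * Q).rank := rank_mul_le_left _ _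

end RankOneSidedInverse

section SignMatrix

/-- The matrix `S` whose rows are the sign vectors on `ι`; it gives the factorization
`A = S D Sᵀ`. -/
noncomputable def signMatrix (ι : Type*) : Matrix (ι → Bool) ι ℝ :=
  of fun u i => sgn (u i)

variable (ι : Type*) [Fintype ι] [DecidableEq ι]

/-- A left inverse of `signMatrix ι`: row `i` is half the difference of the basis vectors indexed by
the all-ones sign vector and by its flip at `i`. -/
noncomputable def signMatrixLeftInv : Matrix ι (ι → Bool) ℝ :=
  of fun i => (1 / 2 : ℝ) •
    (Pi.single (fun _ => true) 1 - Pi.single (Function.update (fun _ => true) i false) 1)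

theorem signMatrixLeftInv_mul_signMatrix : signMatrixLeftInv ι * signMatrix ι = 1 := by
  ext i j
  have row_eq : signMatrixLeftInv ι i = (1 / 2 : ℝ) •
      (Pi.single (fun _ => true) 1 - Pi.single (Function.update (fun _ => true) i false) 1) := rfl
  have entry_eq : (signMatrixLeftInv ι * signMatrix ι) i j =
      1 / 2 * (sgn true - sgn (Function.update (fun _ => true) i false j)) := by
    rw [mul_apply_eq_vecMul, row_eq, smul_vecMul, sub_vecMul, single_one_vecMul,
      single_one_vecMul]
    rfl
  rw [entry_eq]
  obtain rfl | hij := eq_or_ne i j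
  · norm_num [sgn]
  · simp [Function.update_of_ne hij.symm, one_apply_ne hij]

variable {ι}

theorem rank_signMatrix_mul_mul_transpose (M : Matrix ι ι ℝ) :
    (signMatrix ι * M * (signMatrix ι)ᵀ).rank = M.rank := by
  have right_inv : (signMatrix ι)ᵀ * (signMatrixLeftInv ι)ᵀ = 1 := by
    rw [← transpose_mul, signMatrixLeftInv_mul_signMatrix, transpose_one]
  rw [rank_mul_eq_left_of_mul_eq_one right_inv,
    rank_mul_eq_right_of_mul_eq_one (signMatrixLeftInv_mul_signMatrix ι)]

end SignMatrix

theorem volcanoA_eq_signMatrix_mul_diagonal_mul_transpose (K : ℕ) :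
    volcanoA K =
      signMatrix (Fin K) * diagonal (fun m : Fin K => (-1 : ℝ) ^ ((m : ℕ) + 1)) *
        (signMatrix (Fin K))ᵀ := by
  ext u v
  rw [mul_apply]
  simp only [volcanoA, signMatrix, mul_diagonal, of_apply, transpose_apply]
  exact Finset.sum_congr rfl fun m _ => by ring

theorem stmt5_general (K : ℕ) : (volcanoA K).rank = K := by
  rw [volcanoA_eq_signMatrix_mul_diagonal_mul_transpose, rank_signMatrix_mul_mul_transpose,
    rank_diagonal]
  simp

/-- The rank of `A` equals `K`. -/
theorem stmt5 (K : ℕ) (hK : 0 < K) (hKeven : Even K) :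
    (volcanoA K).rank = K :=
  stmt5_general K
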